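/- Let $n$ be a positive integer, $q = 2^n$, and $d = q^3 + q^2 + q - 1$. The power function $F(x) = x^d$ on $\mathbb{F}_{q^4}$ has differential uniformity $q^2$, i.e., $\max_{a \neq 0, b} |\{x \in \mathbb{F}_{q^4} : F(x+a) + F(x) = b\}| = q^2$. -/

import Mathlib

/-!
Let `σ` be the `q`-power map, so `σ⁴ = 1` and `x ^ d = σ x * σ² x * σ³ x / x`. With `T` and `E` the
first and third elementary symmetric functions of the four conjugates of `x`, the derivative of this
map in direction `1` is `1 + (T x * x + E x) / (x ^ 2 + x)`, where `T x` and `E x` lie in the field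
`F` fixed by `σ`.

It takes the value `1` iff `T x * x + E x = 0`. Comparing with the conjugate equation gives
`T x = 0` or `x ∈ F`, and if `T x = 0` then `E x` factors into conjugates of `x + σ x` and
`x + σ² x`; hence the solutions are the `q ^ 2` fixed points of `σ²`.

For a value `1 + c` with `c ≠ 0`, each of the at most `q` possible traces `A ∈ F` is attained by at
most `q` solutions. They all lie in the additive group `c * x ^ 2 + (c + A) * x ∈ F`, of order at
most `2 * q`, and on them a suitable additive map has a constant nonzero value; such a fiber fills
at most half of the group, being disjoint from its translate into the kernel. If `A ≠ 0` that map is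
`T`; if `A = 0` it is `x ↦ x + σ² x`, whose value on the solutions is determined by `c`.
-/

section Counting

theorem ncard_le_mul_ncard_of_mapsTo {α β : Type*} {s : Set α} {t : Set β} {f : α → β} {k : ℕ}
    (hs : s.Finite) (ht : t.Finite) (hf : Set.MapsTo f s t)
    (hk : ∀ b ∈ t, {a ∈ s | f a = b}.ncard ≤ k) : s.ncard ≤ k * t.ncard := by
  classical
  lift s to Finset α using hs
  lift t to Finset β using ht
  rw [Set.ncard_coe_finset, Set.ncard_coe_finset]
  refine Finset.card_le_mul_card_image_of_maps_to hf k fun b hb => ?_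
  rw [← Set.ncard_coe_finset, Finset.coe_filter]
  exact hk b hb

theorem two_mul_ncard_mem_and_eq_le {G H : Type*} [AddGroup G] [AddGroup H] (W : AddSubgroup G)
    [Finite W] (ψ : G →+ H) {e : H} (he : e ≠ 0) :
    2 * {x : G | x ∈ W ∧ ψ x = e}.ncard ≤ (W : Set G).ncard := by
  set T := {x : G | x ∈ W ∧ ψ x = e}
  obtain hempty | ⟨x₀, hx₀, hψx₀⟩ := T.eq_empty_or_nonempty
  · simp only [hempty, Set.ncard_empty, mul_zero, zero_le]
  have hfin : T.Finite := (W : Set G).toFinite.subset fun x hx => hx.1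
  have hdisj : Disjoint T ((· - x₀) '' T) := by
    rw [Set.disjoint_right]
    rintro _ ⟨x, ⟨-, hx⟩, rfl⟩ ⟨-, hx'⟩
    rw [map_sub, hx, hψx₀, sub_self] at hx'
    exact he hx'.symm
  have hsub : T ∪ (· - x₀) '' T ⊆ W := by
    rintro _ (hx | ⟨x, hx, rfl⟩)
    · exact hx.1
    · exact W.sub_mem hx.1 hx₀
  calc 2 * T.ncard = T.ncard + ((· - x₀) '' T).ncard := by
        rw [Set.ncard_image_of_injective T sub_left_injective, two_mul]
    _ = (T ∪ (· - x₀) '' T).ncard := (Set.ncard_union_eq hdisj hfin (hfin.image _)).symm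
    _ ≤ (W : Set G).ncard := Set.ncard_le_ncard hsub

theorem ncard_quadratic_eq_le_two {K : Type*} [Field K] {c : K} (hc : c ≠ 0) (m r : K) :
    {x : K | c * x ^ 2 + m * x = r}.ncard ≤ 2 := by
  obtain hempty | ⟨y, hy⟩ := {x : K | c * x ^ 2 + m * x = r}.eq_empty_or_nonempty
  · simp only [hempty, Set.ncard_empty, zero_le]
  refine (Set.ncard_le_ncard (t := {y, -y - m / c}) fun x hx => ?_).trans
    ((Set.ncard_insert_le _ _).trans_eq (by rw [Set.ncard_singleton]))
  have hmul : (x - y) * (x - (-y - m / c)) = 0 := by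
    field_simp
    linear_combination hx.out - hy.out
  exact (mul_eq_zero.1 hmul).imp sub_eq_zero.1 sub_eq_zero.1

theorem ncard_quadratic_mem_and_eq_le {K H : Type*} [Field K] [Finite K] [CharP K 2] [AddGroup H]
    (S : AddSubgroup K) {c : K} (hc : c ≠ 0) (m : K) (ψ : K →+ H) {e : H} (he : e ≠ 0) :
    {x : K | c * x ^ 2 + m * x ∈ S ∧ ψ x = e}.ncard ≤ (S : Set K).ncard := by
  let L : K →+ K :=
    (AddMonoidHom.mulLeft c).comp (frobenius K 2).toAddMonoidHom + AddMonoidHom.mulLeft m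
  have hdouble : 2 * {x : K | c * x ^ 2 + m * x ∈ S ∧ ψ x = e}.ncard ≤ (S.comap L : Set K).ncard :=
    two_mul_ncard_mem_and_eq_le (S.comap L) ψ he
  have hcomap : (S.comap L : Set K).ncard ≤ 2 * (S : Set K).ncard :=
    ncard_le_mul_ncard_of_mapsTo (Set.toFinite _) (Set.toFinite _) (fun _ hx => hx) fun r _ =>
      (Set.ncard_le_ncard fun _ hx => hx.2).trans (ncard_quadratic_eq_le_two hc m r)
  lia

open Polynomial in
theorem ncard_pow_eq_self {K : Type*} [Field K] [Fintype K] {q m : ℕ} (hq : 1 < q)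
    (hK : Fintype.card K = q ^ m) : {x : K | x ^ q = x}.ncard = q := by
  classical
  have hP : (X ^ q - X : K[X]) ≠ 0 := FiniteField.X_pow_card_sub_X_ne_zero K hq
  have hQ : (X ^ Fintype.card K - X : K[X]) ≠ 0 :=
    FiniteField.X_pow_card_sub_X_ne_zero K Fintype.one_lt_card
  have hdvd : (X ^ q - X : K[X]) ∣ X ^ Fintype.card K - X := by
    simpa only [pow_one, hK] using dvd_pow_pow_sub_self_of_dvd (r := (X : K[X])) (p := q)
      (one_dvd m)
  have hQsplits : (X ^ Fintype.card K - X : K[X]).Splits := by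
    rw [splits_iff_card_roots, FiniteField.roots_X_pow_card_sub_X,
      FiniteField.X_pow_card_sub_X_natDegree_eq K Fintype.one_lt_card]
    rfl
  have hnodup : (X ^ q - X : K[X]).roots.Nodup := by
    refine Multiset.nodup_of_le (roots.le_of_dvd hQ hdvd) ?_
    rw [FiniteField.roots_X_pow_card_sub_X]
    exact Finset.univ.nodup
  have hroots : {x : K | x ^ q = x} = (X ^ q - X : K[X]).roots.toFinset := by
    ext x
    simp [hP, sub_eq_zero]
  rw [hroots, Set.ncard_coe_finset, Multiset.toFinset_card_of_nodup hnodup,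
    ← (hQsplits.of_dvd hQ hdvd).natDegree_eq_card_roots,
    FiniteField.X_pow_card_sub_X_natDegree_eq K hq]

theorem ncard_pow_derivative_eq_div {K : Type*} [Field K] (d : ℕ) {a : K} (ha : a ≠ 0) (b : K) :
    {x : K | (x + a) ^ d + x ^ d = b}.ncard =
      {x : K | (x + 1) ^ d + x ^ d = b / a ^ d}.ncard := by
  have hpre : {x : K | (x + 1) ^ d + x ^ d = b / a ^ d} =
      (a * ·) ⁻¹' {x : K | (x + a) ^ d + x ^ d = b} := by
    ext x
    rw [Set.mem_preimage, Set.mem_ofPred_eq, Set.mem_ofPred_eq, eq_div_iff (pow_ne_zero d ha),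
      ← mul_add_one a x, mul_pow, mul_pow, ← mul_add, mul_comm]
  rw [hpre, Set.ncard_preimage_of_injective_subset_range (mul_right_injective₀ ha)]
  exact fun x _ => ⟨x / a, mul_div_cancel₀ x ha⟩

end Counting

section Conjugates

variable {K : Type*} [Field K] (σ : K →+* K)

/-- The trace `x + σ x + σ² x + σ³ x` to the fixed field of an automorphism `σ` of order dividing
four, as an additive map. -/
def conjTrace : K →+ K :=
  .id K + σ.toAddMonoidHom + (σ.comp σ).toAddMonoidHom + (σ.comp (σ.comp σ)).toAddMonoidHom

/-- The third elementary symmetric function of the conjugates `x, σ x, σ² x, σ³ x`. -/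
def conjEsymmThree (x : K) : K :=
  (x + σ (σ x)) * (σ x * σ (σ (σ x))) + (σ x + σ (σ (σ x))) * (x * σ (σ x))

/-- The map `σ x * σ² x * σ³ x / x`, which is `x ^ (q ^ 3 + q ^ 2 + q - 1)` when `σ` is the
`q`-power map; at `0` both are `0` because `0 / 0 = 0`. -/
def conjQuotient (x : K) : K :=
  σ x * σ (σ x) * σ (σ (σ x)) / x

theorem conjTrace_apply (x : K) : conjTrace σ x = x + σ x + σ (σ x) + σ (σ (σ x)) :=
  rfl

variable {σ}

theorem pow_eq_conjQuotient {q : ℕ} (hq : 0 < q) (hσ : ∀ x, σ x = x ^ q) (x : K) :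
    x ^ (q ^ 3 + q ^ 2 + q - 1) = conjQuotient σ x := by
  have hq2 : 0 < q ^ 2 := pow_pos hq 2
  obtain rfl | hx := eq_or_ne x 0
  · rw [zero_pow (by lia), conjQuotient, div_zero]
  rw [conjQuotient, eq_div_iff hx, ← pow_succ, Nat.sub_add_cancel (by lia)]
  simp only [hσ]
  ring

section OrderFour

variable (hσ : ∀ x, σ (σ (σ (σ x))) = x)
include hσ

theorem map_conjTrace (x : K) : σ (conjTrace σ x) = conjTrace σ x := by
  simp only [conjTrace_apply, map_add, hσ]
  ring

theorem map_conjEsymmThree (x : K) : σ (conjEsymmThree σ x) = conjEsymmThree σ x := by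
  simp only [conjEsymmThree, map_add, map_mul, hσ]
  ring

end OrderFour

variable [CharP K 2]

theorem sq_add_self_eq_zero_iff {x : K} : x ^ 2 + x = 0 ↔ x = 0 ∨ x = 1 := by
  rw [sq, ← mul_add_one, mul_eq_zero, CharTwo.add_eq_zero]

/-- At `x = 0` and `x = 1` the fraction has denominator `0`, hence value `0`, and the identity
still holds. -/
theorem conjQuotient_add_one_add (x : K) :
    conjQuotient σ (x + 1) + conjQuotient σ x =
      1 + (conjTrace σ x * x + conjEsymmThree σ x) / (x ^ 2 + x) := by
  have h2 : (2 : K) = 0 := CharTwo.two_eq_zero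
  by_cases hden : x ^ 2 + x = 0
  · obtain rfl | rfl := sq_add_self_eq_zero_iff.1 hden <;>
      simp [conjQuotient, CharTwo.add_self_eq_zero]
  have hx : x ≠ 0 := by rintro rfl; simp at hden
  have hx1 : x + 1 ≠ 0 := fun h => hden (by linear_combination x * h)
  simp only [conjQuotient, conjTrace_apply, conjEsymmThree, map_add, map_one]
  generalize σ (σ (σ x)) = w
  generalize σ (σ x) = z
  generalize σ x = y
  field_simp
  linear_combination (x * y * z * w - x ^ 2) * h2

theorem conjEsymmThree_eq_of_conjTrace_eq_zero {x : K} (hT : conjTrace σ x = 0) :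
    conjEsymmThree σ x = (x + σ (σ x)) * ((x + σ x) * σ (x + σ x)) := by
  have hw : σ (σ (σ x)) = x + σ x + σ (σ x) :=
    (CharTwo.add_eq_zero.1 (conjTrace_apply σ x ▸ hT)).symm
  rw [conjEsymmThree, hw, map_add]
  grind

theorem conjTrace_mul_add_conjEsymmThree_eq_zero_iff (hσ : ∀ x, σ (σ (σ (σ x))) = x) {x : K} :
    conjTrace σ x * x + conjEsymmThree σ x = 0 ↔ σ (σ x) = x := by
  constructor
  · intro h
    have hfixed : x + σ x = 0 → σ (σ x) = x := fun h => by
      rw [← CharTwo.add_eq_zero.1 h, ← CharTwo.add_eq_zero.1 h]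
    have hconj : conjTrace σ x * σ x + conjEsymmThree σ x = 0 := by
      simpa only [map_add, map_mul, map_conjTrace hσ, map_conjEsymmThree hσ, map_zero]
        using congrArg σ h
    have hmul : conjTrace σ x * (x + σ x) = 0 := by
      rw [mul_add, ← CharTwo.add_eq_zero.2 (h.trans hconj.symm)]
      linear_combination -conjEsymmThree σ x * (CharTwo.two_eq_zero : (2 : K) = 0)
    obtain hT | hF := mul_eq_zero.1 hmul
    · rw [hT, zero_mul, zero_add, conjEsymmThree_eq_of_conjTrace_eq_zero hT, mul_eq_zero,
        mul_eq_zero, map_eq_zero, or_self] at h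
      exact h.elim (fun hu => (CharTwo.add_eq_zero.1 hu).symm) hfixed
    · exact hfixed hF
  · intro h
    simp only [conjTrace_apply, conjEsymmThree, h]
    linear_combination (x ^ 2 + x * σ x + x * σ x ^ 2 + x ^ 2 * σ x) *
      (CharTwo.two_eq_zero : (2 : K) = 0)

theorem setOf_conjQuotient_derivative_eq_one (hσ : ∀ x, σ (σ (σ (σ x))) = x) :
    {x | conjQuotient σ (x + 1) + conjQuotient σ x = 1} = {x | σ (σ x) = x} := by
  ext x
  rw [Set.mem_ofPred_eq, Set.mem_ofPred_eq, conjQuotient_add_one_add, add_eq_left, div_eq_zero_iff,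
    conjTrace_mul_add_conjEsymmThree_eq_zero_iff hσ, or_iff_left_iff_imp, sq_add_self_eq_zero_iff]
  rintro (rfl | rfl) <;> simp only [map_zero, map_one]

/-- In terms of `u = x + σ² x`, `s = x + σ x`, `p = g + σ g` and `κ = g + σ² g`, the hypotheses give
`σ s = s + u` and the linear relation `u * p + κ * s = 1`, from which `s` is eliminated. -/
theorem sq_mul_eq_of_conjTrace_eq_zero (hσ : ∀ x, σ (σ (σ (σ x))) = x) {g x : K}
    (hT : conjTrace σ x = 0) (hE : conjEsymmThree σ x ≠ 0)
    (hx : x ^ 2 + x = g * conjEsymmThree σ x) :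
    (x + σ (σ x)) ^ 2 * ((g + σ g) * σ (g + σ g)) = 1 + (g + σ (σ g)) := by
  have h2 : (2 : K) = 0 := CharTwo.two_eq_zero
  have hEfixed := map_conjEsymmThree hσ x
  have hEfactor := conjEsymmThree_eq_of_conjTrace_eq_zero hT
  rw [map_add] at hEfactor ⊢
  have hx1 : σ x ^ 2 + σ x = σ g * conjEsymmThree σ x := by
    simpa only [map_add, map_mul, map_pow, hEfixed] using congrArg σ hx
  have hx2 : σ (σ x) ^ 2 + σ (σ x) = σ (σ g) * conjEsymmThree σ x := by
    simpa only [map_add, map_mul, map_pow, hEfixed] using congrArg σ hx1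
  generalize conjEsymmThree σ x = E at *
  obtain ⟨u, hu⟩ : ∃ u, u = x + σ (σ x) := ⟨_, rfl⟩
  obtain ⟨s, hs⟩ : ∃ s, s = x + σ x := ⟨_, rfl⟩
  obtain ⟨p, hp⟩ : ∃ p, p = g + σ g := ⟨_, rfl⟩
  obtain ⟨κ, hκ⟩ : ∃ κ, κ = g + σ (σ g) := ⟨_, rfl⟩
  have hσs : σ x + σ (σ x) = s + u := by rw [hs, hu]; linear_combination -x * h2
  have hσp : σ g + σ (σ g) = p + κ := by rw [hp, hκ]; linear_combination -g * h2
  rw [← hu, ← hs, hσs] at hEfactor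
  rw [← hu, ← hp, ← hκ, hσp]
  have hsp : s ^ 2 + s = p * E := by
    rw [hs, hp]
    linear_combination hx + hx1 + x * σ x * h2
  have huκ : u ^ 2 + u = κ * E := by
    rw [hu, hκ]
    linear_combination hx + hx2 + x * σ (σ x) * h2
  have hu0 : u ≠ 0 := left_ne_zero_of_mul (hEfactor ▸ hE)
  have hV0 : s * (s + u) ≠ 0 := right_ne_zero_of_mul (hEfactor ▸ hE)
  have hu1 : u + 1 = κ * (s * (s + u)) :=
    mul_left_cancel₀ hu0 (by linear_combination huκ + κ * hEfactor)
  have hlin : u * p + κ * s = 1 :=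
    mul_left_cancel₀ hV0 (by linear_combination -hsp - p * hEfactor - s * hu1 + s * h2)
  linear_combination (u * p - κ * s + 1 + κ * u) * hlin + κ * hu1 + (κ ^ 2 * s ^ 2 - κ * s - κ) * h2

theorem add_map_map_eq_of_conjTrace_eq_zero (hσ : ∀ x, σ (σ (σ (σ x))) = x) {g x y : K}
    (hTx : conjTrace σ x = 0) (hEx : conjEsymmThree σ x ≠ 0)
    (hx : x ^ 2 + x = g * conjEsymmThree σ x)
    (hTy : conjTrace σ y = 0) (hEy : conjEsymmThree σ y ≠ 0)
    (hy : y ^ 2 + y = g * conjEsymmThree σ y) :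
    x + σ (σ x) = y + σ (σ y) := by
  have hxy := (sq_mul_eq_of_conjTrace_eq_zero hσ hTx hEx hx).trans
    (sq_mul_eq_of_conjTrace_eq_zero hσ hTy hEy hy).symm
  have hp : g + σ g ≠ 0 := by
    intro hp
    have hσg : σ g = g := (CharTwo.add_eq_zero.1 hp).symm
    simpa [hσg, CharTwo.add_self_eq_zero] using sq_mul_eq_of_conjTrace_eq_zero hσ hTx hEx hx
  exact CharTwo.sq_injective (mul_right_cancel₀ (mul_ne_zero hp ((map_ne_zero σ).2 hp)) hxy)

end Conjugates

section Bound

variable {K : Type*} [Field K] [Finite K] [CharP K 2] {σ : K →+* K}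
  (hσ : ∀ x, σ (σ (σ (σ x))) = x)
include hσ

theorem ncard_solutions_conjTrace_eq_le {c A : K} (hc : c ≠ 0) (hA : A ≠ 0) :
    {x | c * (x ^ 2 + x) = conjTrace σ x * x + conjEsymmThree σ x ∧ conjTrace σ x = A}.ncard ≤
      {x | σ x = x}.ncard := by
  refine (Set.ncard_le_ncard fun x hx => ?_).trans (ncard_quadratic_mem_and_eq_le
    (σ.eqLocusField (.id K)).toSubring.toAddSubgroup hc (c + A) (conjTrace σ) hA)
  obtain ⟨hx, rfl⟩ := hx
  refine ⟨?_, rfl⟩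
  have hE : c * x ^ 2 + (c + conjTrace σ x) * x = conjEsymmThree σ x := by
    linear_combination hx + conjTrace σ x * x * (CharTwo.two_eq_zero : (2 : K) = 0)
  rw [hE]
  exact map_conjEsymmThree hσ x

theorem ncard_solutions_conjTrace_eq_zero_le {c : K} (hc : c ≠ 0) :
    {x | x ^ 2 + x ≠ 0 ∧ c * (x ^ 2 + x) = conjEsymmThree σ x ∧ conjTrace σ x = 0}.ncard ≤
      {x | σ x = x}.ncard := by
  set S := {x | x ^ 2 + x ≠ 0 ∧ c * (x ^ 2 + x) = conjEsymmThree σ x ∧ conjTrace σ x = 0}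
  have hE : ∀ x ∈ S, conjEsymmThree σ x ≠ 0 := fun x hx => hx.2.1 ▸ mul_ne_zero hc hx.1
  have hg : ∀ x ∈ S, x ^ 2 + x = c⁻¹ * conjEsymmThree σ x := fun x hx =>
    (eq_inv_mul_iff_mul_eq₀ hc).2 hx.2.1
  obtain hempty | ⟨y, hy⟩ := S.eq_empty_or_nonempty
  · simp only [hempty, Set.ncard_empty, zero_le]
  have hu : y + σ (σ y) ≠ 0 := fun hu => hE y hy (by
    rw [conjEsymmThree_eq_of_conjTrace_eq_zero hy.2.2, hu, zero_mul])
  refine (Set.ncard_le_ncard fun x hx => ?_).trans (ncard_quadratic_mem_and_eq_le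
    (σ.eqLocusField (.id K)).toSubring.toAddSubgroup hc c
    (.id K + (σ.comp σ).toAddMonoidHom) hu)
  refine ⟨?_, add_map_map_eq_of_conjTrace_eq_zero hσ hx.2.2 (hE x hx) (hg x hx) hy.2.2 (hE y hy)
    (hg y hy)⟩
  rw [← mul_add, hx.2.1]
  exact map_conjEsymmThree hσ x

theorem ncard_conjQuotient_derivative_eq_le {b : K} (hb : b ≠ 1) :
    {x | conjQuotient σ (x + 1) + conjQuotient σ x = b}.ncard ≤ {x | σ x = x}.ncard ^ 2 := by
  have hc : b - 1 ≠ 0 := sub_ne_zero.2 hb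
  have hsol : ∀ x, conjQuotient σ (x + 1) + conjQuotient σ x = b → x ^ 2 + x ≠ 0 ∧
      (b - 1) * (x ^ 2 + x) = conjTrace σ x * x + conjEsymmThree σ x := by
    rintro x rfl
    rw [conjQuotient_add_one_add, add_sub_cancel_left] at hc ⊢
    have hden : x ^ 2 + x ≠ 0 := (div_ne_zero_iff.1 hc).2
    exact ⟨hden, div_mul_cancel₀ _ hden⟩
  rw [sq]
  refine ncard_le_mul_ncard_of_mapsTo (f := conjTrace σ) (Set.toFinite _) (Set.toFinite _)
    (fun x _ => map_conjTrace hσ x) fun A _ => ?_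
  obtain rfl | hA := eq_or_ne A 0
  · refine (Set.ncard_le_ncard ?_).trans (ncard_solutions_conjTrace_eq_zero_le hσ hc)
    rintro x ⟨hx, hT⟩
    obtain ⟨hden, heq⟩ := hsol x hx
    exact ⟨hden, by rw [heq, hT, zero_mul, zero_add], hT⟩
  · refine (Set.ncard_le_ncard ?_).trans (ncard_solutions_conjTrace_eq_le hσ hc hA)
    exact fun x hx => ⟨(hsol x hx.1).2, hx.2⟩

end Bound

/-- The power map `x ↦ x^d`, `d = q³+q²+q-1`, on `𝔽_{q⁴}` has differential
uniformity `q²`: the maximum over `a ≠ 0`, `b` of the number of solutions of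
`(x+a)^d + x^d = b` is `q²`. -/
theorem stmt18 (n : ℕ) (hn : 0 < n) (q : ℕ) (hq : q = 2 ^ n)
    (K : Type*) [Field K] [Fintype K] (hK : Fintype.card K = q ^ 4)
    (d : ℕ) (hd : d = q ^ 3 + q ^ 2 + q - 1) :
    IsGreatest {m : ℕ | ∃ a b : K, a ≠ 0 ∧
        {x : K | (x + a) ^ d + x ^ d = b}.ncard = m} (q ^ 2) := by
  have hq1 : 1 < q := hq ▸ Nat.one_lt_two_pow hn.ne'
  have : Fact (Nat.Prime 2) := ⟨Nat.prime_two⟩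
  have : CharP K 2 := charP_of_card_eq_prime_pow (f := n * 4) (by rw [hK, hq, pow_mul])
  let σ : K →+* K := iterateFrobenius K 2 n
  have hσq (x : K) : σ x = x ^ q := by rw [hq]; rfl
  have hσσ (x : K) : σ (σ x) = x ^ q ^ 2 := by simp only [hσq, ← pow_mul, sq]
  have hσ (x : K) : σ (σ (σ (σ x))) = x := by
    rw [hσσ, hσσ, ← pow_mul, ← pow_add, ← hK, FiniteField.pow_card]
  have hpow (x : K) : x ^ d = conjQuotient σ x := hd ▸ pow_eq_conjQuotient (by lia) hσq x
  have hone : {x : K | (x + 1) ^ d + x ^ d = 1}.ncard = q ^ 2 := by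
    simp only [hpow, setOf_conjQuotient_derivative_eq_one hσ, hσσ]
    exact ncard_pow_eq_self (m := 2) (Nat.one_lt_pow two_ne_zero hq1) (by rw [hK, ← pow_mul])
  refine ⟨⟨1, 1, one_ne_zero, hone⟩, ?_⟩
  rintro _ ⟨a, b, ha, rfl⟩
  rw [ncard_pow_derivative_eq_div d ha]
  obtain hb | hb := eq_or_ne (b / a ^ d) 1
  · rw [hb, hone]
  · simpa only [hpow, hσq, ncard_pow_eq_self hq1 hK] using ncard_conjQuotient_derivative_eq_le hσ hb
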